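/- Fix an integer q ≥ 1 and a real number M > 0, and consider the weighted directed graph G_{q,M} defined in the context. For every set Q of trampoline nodes with |Q| = q (i.e., Q omits at least one trampoline node), there exists an index j ∈ {0,…,q} with t_j ∉ Q such that: (i) the path s → t_j → u_j is a valid directed path from s to u_j of total weight 1; and (ii) every directed path from s to u_j whose first edge goes to a trampoline node in Q has total weight at least M + 1. Consequently, a route-discovery procedure that only learns routes passing through the q queried trampoline nodes in Q either returns a route of weight at least M + 1 — at least M + 1 times the weight of the optimal route — or returns no route at all. -/

import Mathlib

/-!
Statement 0: the lower-bound topology `G_{q,M}` from Lemma 1 (efficiency).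

Vertices: a source `s`, trampoline nodes `t 0, …, t q`, outer nodes `u 0, …, u q`.
Edges: `s → t i` of weight `0`, `t i → u i` of weight `1`, and `u i → u j` of
weight `M` for all `i ≠ j`.
-/

/-- Vertices of the graph `G_{q,M}`. -/
inductive Vtx (q : ℕ) where
  | s : Vtx q
  | t : Fin (q + 1) → Vtx q
  | u : Fin (q + 1) → Vtx q
deriving DecidableEq

/-- Directed edges of `G_{q,M}`: `s → t i`, `t i → u i`, and `u i → u j` for `i ≠ j`. -/
inductive Vtx.Adj {q : ℕ} : Vtx q → Vtx q → Prop where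
  | st (i : Fin (q + 1)) : Vtx.Adj .s (.t i)
  | tu (i : Fin (q + 1)) : Vtx.Adj (.t i) (.u i)
  | uu {i j : Fin (q + 1)} (h : i ≠ j) : Vtx.Adj (.u i) (.u j)

/-- Edge weights of `G_{q,M}`: `w(s → t i) = 0`, `w(t i → u i) = 1`,
`w(u i → u j) = M` (the value on non-edges is irrelevant). -/
def Vtx.wt {q : ℕ} (M : ℝ) : Vtx q → Vtx q → ℝ
  | .s, .t _ => 0
  | .t _, .u _ => 1
  | .u _, .u _ => M
  | _, _ => 0

/-- The weight of a walk (given as the list of visited vertices) is the sum of the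
weights of its consecutive edges. -/
def Vtx.walkWeight {q : ℕ} (M : ℝ) : List (Vtx q) → ℝ
  | a :: b :: rest => Vtx.wt M a b + Vtx.walkWeight M (b :: rest)
  | _ => 0

/-- A directed path from `a` to `b`: a list of vertices which is a chain of edges,
visits pairwise distinct vertices, starts at `a` and ends at `b`. -/
def Vtx.IsPathFrom {q : ℕ} (p : List (Vtx q)) (a b : Vtx q) : Prop :=
  p.Chain' Vtx.Adj ∧ p.Nodup ∧ p.head? = some a ∧ p.getLast? = some b

/-!
A walk that has reached an outer node can only continue inside the clique, so the weight of a walk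
`t i, u i, …` is exactly `1 + k * M`, where `k` counts the steps it takes after `u i`. A walk whose
first edge goes to some `t i` with `i ≠ j` reaches `u i` and still has to move on to `u j`; thus
`k ≥ 1`. As `Q` is too small to contain all indices, any `j` outside it forces this detour.
-/

namespace Vtx

variable {q : ℕ} {M : ℝ} {i j : Fin (q + 1)} {v : Vtx q} {l p : List (Vtx q)}

theorem t_adj_iff : Adj (t i) v ↔ v = u i := by
  refine ⟨fun h => ?_, ?_⟩
  · cases h
    rfl
  · rintro rfl
    exact .tu i

theorem u_adj_iff : Adj (u i) v ↔ ∃ k, i ≠ k ∧ v = u k := by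
  refine ⟨fun h => ?_, ?_⟩
  · cases h with
    | uu hik => exact ⟨_, hik, rfl⟩
  · rintro ⟨k, hik, rfl⟩
    exact .uu hik

theorem walkWeight_u_cons (hl : (u i :: l).IsChain Adj) :
    walkWeight M (u i :: l) = l.length * M := by
  induction l generalizing i with
  | nil => simp [walkWeight]
  | cons v l ih =>
    obtain ⟨hv, htail⟩ := List.isChain_cons_cons.1 hl
    obtain ⟨k, -, rfl⟩ := u_adj_iff.1 hv
    calc walkWeight M (u i :: u k :: l)
        = M + walkWeight M (u k :: l) := rfl
      _ = M + l.length * M := by rw [ih htail]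
      _ = (u k :: l).length * M := by push_cast [List.length_cons]; ring

theorem walkWeight_t_u_cons (hl : (u i :: l).IsChain Adj) :
    walkWeight M (t i :: u i :: l) = 1 + l.length * M := by
  rw [← walkWeight_u_cons hl]
  rfl

theorem walkWeight_s_t_cons : walkWeight M (s :: t i :: l) = walkWeight M (t i :: l) :=
  zero_add _

theorem add_one_le_walkWeight_of_isChain (hM : 0 ≤ M) (hij : i ≠ j)
    (hl : (t i :: l).IsChain Adj) (hlast : (t i :: l).getLast? = some (u j)) :
    M + 1 ≤ walkWeight M (t i :: l) := by
  rcases l with _ | ⟨v, m⟩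
  · simp at hlast
  obtain ⟨hv, hm⟩ := List.isChain_cons_cons.1 hl
  obtain rfl : v = u i := t_adj_iff.1 hv
  have hm_ne : m ≠ [] := by
    rintro rfl
    simp [hij] at hlast
  have hlength : (1 : ℝ) ≤ m.length := by
    exact_mod_cast List.length_pos_iff.2 hm_ne
  calc M + 1 ≤ 1 + m.length * M := by linarith [le_mul_of_one_le_left hM hlength]
    _ = walkWeight M (t i :: u i :: m) := (walkWeight_t_u_cons hm).symm

theorem IsPathFrom.exists_eq_cons_cons {a b : Vtx q} (hp : IsPathFrom p a b)
    (hv : p[1]? = some v) : ∃ l, p = a :: v :: l := by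
  obtain ⟨-, -, hhead, -⟩ := hp
  rcases p with _ | ⟨a', _ | ⟨v', l⟩⟩ <;> simp_all

theorem IsPathFrom.add_one_le_walkWeight (hM : 0 ≤ M) (hij : i ≠ j)
    (hp : IsPathFrom p s (u j)) (hi : p[1]? = some (t i)) : M + 1 ≤ walkWeight M p := by
  obtain ⟨l, rfl⟩ := hp.exists_eq_cons_cons hi
  obtain ⟨hchain, -, -, hlast⟩ := hp
  rw [walkWeight_s_t_cons]
  exact add_one_le_walkWeight_of_isChain hM hij (List.isChain_cons_cons.1 hchain).2
    (by simpa only [List.getLast?_cons_cons] using hlast)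

theorem isPathFrom_s_t_u (j : Fin (q + 1)) : IsPathFrom [s, t j, u j] s (u j) :=
  ⟨.cons_cons (.st j) (.cons_cons (.tu j) (.singleton _)), by simp, rfl, rfl⟩

theorem walkWeight_s_t_u (M : ℝ) (j : Fin (q + 1)) : walkWeight M [s, t j, u j] = 1 := by
  rw [walkWeight_s_t_cons, walkWeight_t_u_cons (.singleton _), List.length_nil, Nat.cast_zero,
    zero_mul, add_zero]

end Vtx

/-- For every set `Q` of `q` trampoline nodes (hence omitting at least one of the
`q + 1` trampoline nodes), there is an index `j ∉ Q` such that
(i) `s → t j → u j` is a valid directed path of total weight `1`, and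
(ii) every directed path from `s` to `u j` whose first edge goes to a trampoline
node in `Q` has total weight at least `M + 1`. -/
theorem statement0 (q : ℕ) (hq : 1 ≤ q) (M : ℝ) (hM : 0 < M)
    (Q : Finset (Fin (q + 1))) (hQ : Q.card = q) :
    ∃ j : Fin (q + 1), j ∉ Q ∧
      (Vtx.IsPathFrom [Vtx.s, Vtx.t j, Vtx.u j] Vtx.s (Vtx.u j) ∧
        Vtx.walkWeight M [Vtx.s, Vtx.t j, Vtx.u j] = 1) ∧
      (∀ (p : List (Vtx q)) (i : Fin (q + 1)),
        Vtx.IsPathFrom p Vtx.s (Vtx.u j) → p[1]? = some (Vtx.t i) → i ∈ Q →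
          M + 1 ≤ Vtx.walkWeight M p) := by
  obtain ⟨j, -, hj⟩ : ∃ j ∈ Finset.univ, j ∉ Q :=
    Finset.exists_mem_notMem_of_card_lt_card (by simp [hQ])
  refine ⟨j, hj, ⟨Vtx.isPathFrom_s_t_u j, Vtx.walkWeight_s_t_u M j⟩, fun p i hp hi hiQ => ?_⟩
  exact hp.add_one_le_walkWeight hM.le (ne_of_mem_of_not_mem hiQ hj) hi
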